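/- Let X have GPD(ξ, ψ) distribution with ξ ≠ 0 and support (0, σ), and let c ≥ 0 or c ≤ -σ. The random variable Y = -1/(X + c) has a GPD distribution up to a location shift (i.e., Y - inf(supp Y) is GPD) if and only if c = ψ/ξ. -/

import Mathlib

/-! Write the survival function of GPD(`ξ`, `ψ`) as `exp (-H)`. The cumulative hazard `H` is an
increasing bijection from the support onto `(0, ∞)` with derivative `1 / (ψ + ξ * x)`, and an
increasing map carries GPD(`ξ`, `ψ`) to GPD(`ξ₁`, `ψ₁`) exactly when it carries `H` to the
cumulative hazard `H₁` of the latter.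

If `-c` lies in the support, `-1 / (X + c)` is unbounded below and hence not GPD up to a shift.
Otherwise `g x = -1 / (x + c) - m` is increasing on the support, and differentiating `H₁ ∘ g = H`
gives, with `u = x + c`, the identity
`(ψ₁ - ξ₁ * m) * u ^ 2 - (ξ₁ + ξ) * u + (ξ * c - ψ) = 0` on an interval, so `ξ * c = ψ`.
Conversely, if `ξ * c = ψ`, then `H₁ ∘ g = H` for `m = -1 / c`, `ξ₁ = -ξ` and `ψ₁ = ξ / c`. -/

open MeasureTheory

/-- `Y` has a generalized Pareto distribution with a location parameter:
for some shape `ξ'`, scale `ψ' > 0` and location `μ0`, the excesses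
`Y - μ0` have the GPD(ξ', ψ') tail. -/
def IsGPDWithLoc {Ω : Type*} [MeasurableSpace Ω] (μ : Measure Ω)
    (Y : Ω → ℝ) : Prop :=
  ∃ ξ' ψ' μ0 : ℝ, 0 < ψ' ∧
    ((ξ' = 0 ∧ ∀ x : ℝ, 0 < x →
        μ {ω | Y ω > μ0 + x} = ENNReal.ofReal (Real.exp (-x/ψ'))) ∨
     (ξ' ≠ 0 ∧
        (∀ x : ℝ, 0 < x → (ξ' < 0 → x < ψ'/(-ξ')) →
          μ {ω | Y ω > μ0 + x} = ENNReal.ofReal ((1 + ξ'*x/ψ') ^ (-1/ξ'))) ∧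
        (ξ' < 0 → ∀ x : ℝ, ψ'/(-ξ') ≤ x → μ {ω | Y ω > μ0 + x} = 0)))

open Set Filter Topology

/-- The support of the generalized Pareto distribution GPD(`ξ`, `ψ`): the interval `(0, ∞)` if
`0 ≤ ξ` and `(0, ψ / |ξ|)` if `ξ < 0`, written without division so that both cases, and `ξ = 0`,
are treated alike. -/
def gpdSupport (ξ ψ : ℝ) : Set ℝ := {x | 0 < x ∧ 0 < ψ + ξ * x}

/-- The cumulative hazard of GPD(`ξ`, `ψ`), i.e. minus the logarithm of its survival function, with
GPD(`0`, `ψ`) the exponential distribution of mean `ψ`. -/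
noncomputable def gpdCumHazard (ξ ψ x : ℝ) : ℝ :=
  if ξ = 0 then x / ψ else Real.log (1 + ξ * x / ψ) / ξ

/-- `X` has the generalized Pareto distribution GPD(`ξ`, `ψ`), without location parameter.
Only the survival function on the support is prescribed: for measurable `X` and a probability
measure this determines the law. -/
structure IsGPD {Ω : Type*} [MeasurableSpace Ω] (μ : Measure Ω) (X : Ω → ℝ) (ξ ψ : ℝ) : Prop where
  scale_pos : 0 < ψ
  measure_gt : ∀ x ∈ gpdSupport ξ ψ,
    μ {ω | x < X ω} = ENNReal.ofReal (Real.exp (-gpdCumHazard ξ ψ x))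

section Hazard

variable {ξ ψ x y : ℝ}

lemma mem_gpdSupport_iff (hψ : 0 < ψ) :
    x ∈ gpdSupport ξ ψ ↔ 0 < x ∧ (ξ < 0 → x < ψ / (-ξ)) := by
  refine and_congr_right fun hx => ?_
  rcases lt_or_ge ξ 0 with hξ | hξ
  · rw [forall_prop_of_true hξ, lt_div_iff₀ (neg_pos.2 hξ)]
    constructor <;> intro h <;> linarith
  · exact iff_of_true (by positivity) fun h => absurd h hξ.not_gt

lemma isOpen_gpdSupport : IsOpen (gpdSupport ξ ψ) :=
  isOpen_Ioi.inter (isOpen_lt (g := fun x => ψ + ξ * x) continuous_const (by fun_prop))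

lemma mem_gpdSupport_of_le (hψ : 0 < ψ) (hx : 0 < x) (hxy : x ≤ y) (hy : y ∈ gpdSupport ξ ψ) :
    x ∈ gpdSupport ξ ψ :=
  (mem_gpdSupport_iff hψ).2 ⟨hx, fun hξ => hxy.trans_lt (((mem_gpdSupport_iff hψ).1 hy).2 hξ)⟩

lemma ordConnected_gpdSupport (hψ : 0 < ψ) : (gpdSupport ξ ψ).OrdConnected :=
  ⟨fun _ hx _ hy _ hz => mem_gpdSupport_of_le hψ (hx.1.trans_le hz.1) hz.2 hy⟩

lemma exp_neg_gpdCumHazard_zero : Real.exp (-gpdCumHazard 0 ψ x) = Real.exp (-x / ψ) := by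
  rw [gpdCumHazard, if_pos rfl, neg_div]

lemma exp_neg_gpdCumHazard (hξ : ξ ≠ 0) (hψ : 0 < ψ) (hx : 0 < ψ + ξ * x) :
    Real.exp (-gpdCumHazard ξ ψ x) = (1 + ξ * x / ψ) ^ (-1 / ξ) := by
  rw [Real.rpow_def_of_pos (one_add_div hψ.ne' ▸ div_pos hx hψ), gpdCumHazard, if_neg hξ]
  ring_nf

lemma hasDerivAt_gpdCumHazard (hψ : 0 < ψ) (hx : 0 < ψ + ξ * x) :
    HasDerivAt (gpdCumHazard ξ ψ) (ψ + ξ * x)⁻¹ x := by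
  unfold gpdCumHazard
  split_ifs with hξ
  · simpa [hξ] using (hasDerivAt_id x).div_const ψ
  · have hlin : HasDerivAt (fun x => 1 + ξ * x / ψ) (ξ / ψ) x := by
      simpa using (((hasDerivAt_id x).const_mul ξ).div_const ψ).const_add 1
    have hpos : 0 < 1 + ξ * x / ψ := one_add_div hψ.ne' ▸ div_pos hx hψ
    refine ((hlin.log hpos.ne').div_const ξ).congr_deriv ?_
    rw [one_add_div hψ.ne']
    field_simp

lemma strictMonoOn_gpdCumHazard (hψ : 0 < ψ) :
    StrictMonoOn (gpdCumHazard ξ ψ) (gpdSupport ξ ψ) := by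
  refine strictMonoOn_of_deriv_pos (ordConnected_gpdSupport hψ).convex
    (fun x hx => (hasDerivAt_gpdCumHazard hψ hx.2).continuousAt.continuousWithinAt)
    fun x hx => ?_
  have hx := (interior_subset hx).2
  rw [(hasDerivAt_gpdCumHazard hψ hx).deriv]
  exact inv_pos.2 hx

lemma gpdCumHazard_pos (hψ : 0 < ψ) (hx : x ∈ gpdSupport ξ ψ) : 0 < gpdCumHazard ξ ψ x := by
  have hx0 := hx.1
  unfold gpdCumHazard
  split_ifs with hξ
  · positivity
  have hpos : 0 < 1 + ξ * x / ψ := one_add_div hψ.ne' ▸ div_pos hx.2 hψ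
  rcases lt_or_gt_of_ne hξ with hξ | hξ
  · have : ξ * x / ψ < 0 := div_neg_of_neg_of_pos (mul_neg_of_neg_of_pos hξ hx0) hψ
    exact div_pos_of_neg_of_neg (Real.log_neg hpos (by linarith)) hξ
  · have : 0 < ξ * x / ψ := by positivity
    exact div_pos (Real.log_pos (by linarith)) hξ

lemma surjOn_gpdCumHazard (hψ : 0 < ψ) :
    SurjOn (gpdCumHazard ξ ψ) (gpdSupport ξ ψ) (Ioi 0) := by
  intro h (hh : 0 < h)
  by_cases hξ : ξ = 0
  · refine ⟨ψ * h, ⟨by positivity, by simpa only [hξ, zero_mul, add_zero] using hψ⟩, ?_⟩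
    rw [gpdCumHazard, if_pos hξ]
    field_simp
  -- The witness is the quantile function: it solves `log (1 + ξ * x / ψ) / ξ = h` for `x`.
  refine ⟨ψ * ((Real.exp (ξ * h) - 1) / ξ), ⟨mul_pos hψ ?_, ?_⟩, ?_⟩
  · rcases lt_or_gt_of_ne hξ with hξ | hξ
    · have : Real.exp (ξ * h) < 1 := Real.exp_lt_one_iff.2 (mul_neg_of_neg_of_pos hξ hh)
      exact div_pos_of_neg_of_neg (by linarith) hξ
    · have : 1 < Real.exp (ξ * h) := Real.one_lt_exp_iff.2 (by positivity)
      exact div_pos (by linarith) hξ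
  · have : ψ + ξ * (ψ * ((Real.exp (ξ * h) - 1) / ξ)) = ψ * Real.exp (ξ * h) := by
      field_simp
      ring
    rw [this]
    positivity
  · have : 1 + ξ * (ψ * ((Real.exp (ξ * h) - 1) / ξ)) / ψ = Real.exp (ξ * h) := by
      field_simp
      ring
    rw [gpdCumHazard, if_neg hξ, this, Real.log_exp, mul_div_cancel_left₀ _ hξ]

lemma infinite_gpdSupport (hψ : 0 < ψ) : (gpdSupport ξ ψ).Infinite :=
  .of_image _ ((Ioi_infinite 0).mono (surjOn_gpdCumHazard hψ))

lemma add_mul_eq_of_gpdCumHazard_comp_eventuallyEq {ξ' ψ' g' : ℝ} {g : ℝ → ℝ} (hψ : 0 < ψ)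
    (hψ' : 0 < ψ') (hx : 0 < ψ + ξ * x) (hgx : 0 < ψ' + ξ' * g x) (hg : HasDerivAt g g' x)
    (h : gpdCumHazard ξ' ψ' ∘ g =ᶠ[𝓝 x] gpdCumHazard ξ ψ) :
    ψ' + ξ' * g x = g' * (ψ + ξ * x) := by
  have hderiv : (ψ' + ξ' * g x)⁻¹ * g' = (ψ + ξ * x)⁻¹ :=
    ((hasDerivAt_gpdCumHazard hψ' hgx).comp x hg).unique
      ((hasDerivAt_gpdCumHazard hψ hx).congr_of_eventuallyEq h)
  field_simp at hderiv
  linarith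

end Hazard

section Law

variable {Ω : Type*} [MeasurableSpace Ω] {μ : Measure Ω} {X : Ω → ℝ} {ξ ψ ξ' ψ' : ℝ}

namespace IsGPD

lemma exists_mem_gpdSupport_measure_gt_eq (hX : IsGPD μ X ξ ψ) {h : ℝ} (hh : 0 < h) :
    ∃ x ∈ gpdSupport ξ ψ, μ {ω | x < X ω} = ENNReal.ofReal (Real.exp (-h)) := by
  obtain ⟨x, hx, rfl⟩ := surjOn_gpdCumHazard (ξ := ξ) hX.scale_pos hh
  exact ⟨x, hx, hX.measure_gt x hx⟩

lemma measure_pos_eq_one [IsProbabilityMeasure μ] (hX : IsGPD μ X ξ ψ) :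
    μ {ω | 0 < X ω} = 1 := by
  refine le_antisymm prob_le_one (le_of_tendsto (x := 𝓝[>] (0 : ℝ))
    (f := fun h => ENNReal.ofReal (Real.exp (-h))) ?_ ?_)
  · have hcont : Continuous fun h : ℝ => ENNReal.ofReal (Real.exp (-h)) :=
      ENNReal.continuous_ofReal.comp (by fun_prop)
    simpa using (hcont.tendsto 0).mono_left nhdsWithin_le_nhds
  · filter_upwards [self_mem_nhdsWithin] with h hh
    obtain ⟨x, hx, hxh⟩ := hX.exists_mem_gpdSupport_measure_gt_eq hh
    exact hxh ▸ measure_mono fun ω (hω : x < X ω) => hx.1.trans hω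

lemma ae_pos [IsProbabilityMeasure μ] (hX : IsGPD μ X ξ ψ) (hmeas : Measurable X) :
    ∀ᵐ ω ∂μ, 0 < X ω :=
  (prob_compl_eq_zero_iff (measurableSet_lt measurable_const hmeas)).2 hX.measure_pos_eq_one

lemma ae_mem_gpdSupport_of_pos (hX : IsGPD μ X ξ ψ) :
    ∀ᵐ ω ∂μ, 0 < X ω → X ω ∈ gpdSupport ξ ψ := by
  have hlim : Tendsto (fun h => ENNReal.ofReal (Real.exp (-h))) atTop (𝓝 0) := by
    simpa using ENNReal.tendsto_ofReal Real.tendsto_exp_neg_atTop_nhds_zero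
  refine le_antisymm (ge_of_tendsto hlim ?_) zero_le
  filter_upwards [eventually_gt_atTop 0] with h hh
  obtain ⟨x, hx, hxh⟩ := hX.exists_mem_gpdSupport_measure_gt_eq hh
  refine hxh ▸ measure_mono fun ω hω => ?_
  obtain ⟨hpos, hnot⟩ := Classical.not_imp.1 hω
  exact not_le.1 fun hle => hnot (mem_gpdSupport_of_le hX.scale_pos hpos hle hx)

lemma ae_mem_gpdSupport [IsProbabilityMeasure μ] (hX : IsGPD μ X ξ ψ) (hmeas : Measurable X) :
    ∀ᵐ ω ∂μ, X ω ∈ gpdSupport ξ ψ := by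
  filter_upwards [hX.ae_pos hmeas, hX.ae_mem_gpdSupport_of_pos] with ω hpos himp using himp hpos

lemma strictAntiOn_measure_gt (hX : IsGPD μ X ξ ψ) :
    StrictAntiOn (fun x => μ {ω | x < X ω}) (gpdSupport ξ ψ) := by
  intro x hx y hy hxy
  simp only [hX.measure_gt x hx, hX.measure_gt y hy]
  exact (ENNReal.ofReal_lt_ofReal_iff (Real.exp_pos _)).2
    (Real.exp_lt_exp.2 (neg_lt_neg (strictMonoOn_gpdCumHazard hX.scale_pos hx hy hxy)))

lemma mem_gpdSupport_of_measure_gt [IsProbabilityMeasure μ] (hX : IsGPD μ X ξ ψ)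
    (hmeas : Measurable X) {x : ℝ} (h0 : μ {ω | x < X ω} ≠ 0) (h1 : μ {ω | x < X ω} < 1) :
    x ∈ gpdSupport ξ ψ := by
  have hx : 0 < x := by
    by_contra! hle
    refine h1.not_ge (hX.measure_pos_eq_one ▸ measure_mono fun ω (hω : 0 < X ω) => ?_)
    exact hle.trans_lt hω
  by_contra hnot
  refine h0 (measure_eq_zero_iff_ae_notMem.2 ?_)
  filter_upwards [hX.ae_mem_gpdSupport hmeas] with ω hω hlt
  exact hnot (mem_gpdSupport_of_le hX.scale_pos hx (le_of_lt hlt) hω)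

lemma comp_of_gpdCumHazard_comp_eqOn [IsProbabilityMeasure μ] (hX : IsGPD μ X ξ ψ)
    (hmeas : Measurable X) (hψ' : 0 < ψ') {g : ℝ → ℝ}
    (hmaps : MapsTo g (gpdSupport ξ ψ) (gpdSupport ξ' ψ'))
    (hg : EqOn (gpdCumHazard ξ' ψ' ∘ g) (gpdCumHazard ξ ψ) (gpdSupport ξ ψ)) :
    IsGPD μ (fun ω => g (X ω)) ξ' ψ' := by
  have hmono := strictMonoOn_gpdCumHazard (ξ := ξ) hX.scale_pos
  have hmono' := strictMonoOn_gpdCumHazard (ξ := ξ') hψ'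
  refine ⟨hψ', fun w hw => ?_⟩
  obtain ⟨x, hx, hxw⟩ := surjOn_gpdCumHazard (ξ := ξ) hX.scale_pos (gpdCumHazard_pos hψ' hw)
  obtain rfl : g x = w := hmono'.injOn (hmaps hx) hw ((hg hx).trans hxw)
  rw [← hxw, ← hX.measure_gt x hx]
  refine measure_congr (eventuallyEq_set.2 ?_)
  filter_upwards [hX.ae_mem_gpdSupport hmeas] with ω hω
  calc g x < g (X ω)
      ↔ gpdCumHazard ξ' ψ' (g x) < gpdCumHazard ξ' ψ' (g (X ω)) :=
        (hmono'.lt_iff_lt (hmaps hx) (hmaps hω)).symm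
    _ ↔ gpdCumHazard ξ ψ x < gpdCumHazard ξ ψ (X ω) := by
        rw [← hg hx, ← hg hω, Function.comp_apply, Function.comp_apply]
    _ ↔ x < X ω := hmono.lt_iff_lt hx hω

lemma mem_gpdSupport_and_gpdCumHazard_eq_of_comp [IsProbabilityMeasure μ] (hX : IsGPD μ X ξ ψ)
    (hmeas : Measurable X) {g : ℝ → ℝ} (hg : StrictMonoOn g (gpdSupport ξ ψ))
    (hgX : IsGPD μ (fun ω => g (X ω)) ξ' ψ') (hgmeas : Measurable fun ω => g (X ω))
    {x : ℝ} (hx : x ∈ gpdSupport ξ ψ) :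
    g x ∈ gpdSupport ξ' ψ' ∧ gpdCumHazard ξ' ψ' (g x) = gpdCumHazard ξ ψ x := by
  have htail : μ {ω | g x < g (X ω)} = ENNReal.ofReal (Real.exp (-gpdCumHazard ξ ψ x)) := by
    rw [← hX.measure_gt x hx]
    refine measure_congr (eventuallyEq_set.2 ?_)
    filter_upwards [hX.ae_mem_gpdSupport hmeas] with ω hω using hg.lt_iff_lt hx hω
  have hmem : g x ∈ gpdSupport ξ' ψ' := by
    refine hgX.mem_gpdSupport_of_measure_gt hgmeas ?_ ?_ <;> rw [htail]
    · exact (ENNReal.ofReal_pos.2 (Real.exp_pos _)).ne'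
    · rw [ENNReal.ofReal_lt_one, Real.exp_lt_one_iff]
      exact neg_neg_of_pos (gpdCumHazard_pos hX.scale_pos hx)
  refine ⟨hmem, ?_⟩
  rw [hgX.measure_gt _ hmem,
    ENNReal.ofReal_eq_ofReal_iff (Real.exp_pos _).le (Real.exp_pos _).le] at htail
  exact neg_injective (Real.exp_injective htail)

end IsGPD

lemma isGPD_iff_of_ne_zero (hξ : ξ ≠ 0) (hψ : 0 < ψ) :
    IsGPD μ X ξ ψ ↔ ∀ x : ℝ, 0 < x → (ξ < 0 → x < ψ / (-ξ)) →
      μ {ω | X ω > x} = ENNReal.ofReal ((1 + ξ * x / ψ) ^ (-1 / ξ)) := by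
  constructor
  · intro hX x hx hend
    have hx := (mem_gpdSupport_iff hψ).2 ⟨hx, hend⟩
    exact exp_neg_gpdCumHazard hξ hψ hx.2 ▸ hX.measure_gt x hx
  · refine fun h => ⟨hψ, fun x hx => ?_⟩
    have hx' := (mem_gpdSupport_iff hψ).1 hx
    exact exp_neg_gpdCumHazard hξ hψ hx.2 ▸ h x hx'.1 hx'.2

lemma isGPD_zero_iff (hψ : 0 < ψ) :
    IsGPD μ X 0 ψ ↔ ∀ x : ℝ, 0 < x →
      μ {ω | X ω > x} = ENNReal.ofReal (Real.exp (-x / ψ)) := by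
  constructor
  · intro hX x hx
    exact exp_neg_gpdCumHazard_zero ▸ hX.measure_gt x ⟨hx, by simpa using hψ⟩
  · exact fun h => ⟨hψ, fun x hx => exp_neg_gpdCumHazard_zero ▸ h x hx.1⟩

lemma IsGPD.measure_gt_eq_zero (hX : IsGPD μ X ξ ψ) (hξ : ξ < 0) {x : ℝ} (hx : ψ / (-ξ) ≤ x) :
    μ {ω | X ω > x} = 0 := by
  have hψ := hX.scale_pos
  have hx0 : 0 < x := (div_pos hψ (neg_pos.2 hξ)).trans_le hx
  refine measure_eq_zero_iff_ae_notMem.2 ?_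
  filter_upwards [hX.ae_mem_gpdSupport_of_pos] with ω hω (hlt : x < X ω)
  exact (((mem_gpdSupport_iff hψ).1 (hω (hx0.trans hlt))).2 hξ).not_gt (hx.trans_lt hlt)

lemma isGPDWithLoc_iff_exists_isGPD :
    IsGPDWithLoc μ X ↔ ∃ ξ ψ m : ℝ, IsGPD μ (fun ω => X ω - m) ξ ψ := by
  have hshift (m x : ℝ) : {ω | X ω > m + x} = {ω | X ω - m > x} :=
    ext fun _ => (lt_sub_iff_add_lt' (a := m)).symm
  simp only [IsGPDWithLoc, hshift]
  constructor
  · rintro ⟨ξ, ψ, m, hψ, ⟨rfl, h⟩ | ⟨hξ, h, -⟩⟩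
    · exact ⟨0, ψ, m, (isGPD_zero_iff hψ).2 h⟩
    · exact ⟨ξ, ψ, m, (isGPD_iff_of_ne_zero hξ hψ).2 h⟩
  · rintro ⟨ξ, ψ, m, h⟩
    have hψ := h.scale_pos
    refine ⟨ξ, ψ, m, hψ, ?_⟩
    by_cases hξ : ξ = 0
    · subst hξ
      exact .inl ⟨rfl, (isGPD_zero_iff hψ).1 h⟩
    · exact .inr ⟨hξ, (isGPD_iff_of_ne_zero hξ hψ).1 h, fun hneg _ => h.measure_gt_eq_zero hneg⟩

end Law

section Reciprocal

lemma hasDerivAt_neg_one_div_add_sub {x c : ℝ} (m : ℝ) (hx : x + c ≠ 0) :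
    HasDerivAt (fun x => -1 / (x + c) - m) (1 / (x + c) ^ 2) x := by
  simpa using ((hasDerivAt_const x (-1 : ℝ)).div ((hasDerivAt_id x).add_const c) hx).sub_const m

lemma strictMonoOn_neg_one_div_add_sub {s : Set ℝ} {c : ℝ} (m : ℝ) (hs : s.OrdConnected)
    (hc : -c ∉ s) : StrictMonoOn (fun x => -1 / (x + c) - m) s := by
  have hne : ∀ x ∈ s, x + c ≠ 0 := fun x hx h => hc (eq_neg_of_add_eq_zero_left h ▸ hx)
  refine strictMonoOn_of_deriv_pos hs.convex
    (fun x hx =>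
      (hasDerivAt_neg_one_div_add_sub m (hne x hx)).continuousAt.continuousWithinAt)
    fun x hx => ?_
  have hx := hne x (interior_subset hx)
  rw [(hasDerivAt_neg_one_div_add_sub m hx).deriv]
  positivity

lemma constantCoeff_eq_zero_of_infinite_quadratic_roots {R : Type*} [CommRing R] [IsDomain R]
    {a b d : R} (h : {x | a * x ^ 2 + b * x + d = 0}.Infinite) : d = 0 := by
  open Polynomial in
  have hp : C a * X ^ 2 + C b * X + C d = 0 :=
    eq_zero_of_infinite_isRoot _ (h.mono fun x hx => by simpa using hx)
  simpa using congrArg (Polynomial.eval 0) hp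

variable {Ω : Type*} [MeasurableSpace Ω] {μ : Measure Ω} {X : Ω → ℝ} {ξ ψ ξ' ψ' c m : ℝ}

namespace IsGPD

lemma neg_notMem_gpdSupport_of_ae_lt_reciprocal (hX : IsGPD μ X ξ ψ)
    (h : ∀ᵐ ω ∂μ, m < -1 / (X ω + c)) : -c ∉ gpdSupport ξ ψ := by
  intro hc
  have hm : ∀ᶠ y in 𝓝 (-c), -1 < m * (y + c) :=
    (by fun_prop : ContinuousAt (fun y => m * (y + c)) (-c)).eventually
      (lt_mem_nhds (by simp))
  have hmem : ∀ᶠ y in 𝓝 (-c), y ∈ gpdSupport ξ ψ := isOpen_gpdSupport.eventually_mem hc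
  obtain ⟨y, ⟨hy, hym⟩, hcy : -c < y⟩ :=
    (((hmem.and hm).filter_mono nhdsWithin_le_nhds).and
      (self_mem_nhdsWithin : Ioi (-c) ∈ 𝓝[>] (-c))).exists
  refine (hX.strictAntiOn_measure_gt hc hy hcy).not_ge (measure_mono_ae ?_)
  filter_upwards [h] with ω hω (hcX : -c < X ω)
  by_contra hle
  have hle : X ω ≤ y := not_lt.1 hle
  rw [lt_div_iff₀ (by linarith)] at hω
  nlinarith

lemma mul_eq_of_reciprocal [IsProbabilityMeasure μ] (hX : IsGPD μ X ξ ψ) (hmeas : Measurable X)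
    (hY : IsGPD μ (fun ω => -1 / (X ω + c) - m) ξ' ψ') : ξ * c = ψ := by
  have hYmeas : Measurable fun ω => -1 / (X ω + c) - m := by fun_prop
  have hc : -c ∉ gpdSupport ξ ψ := hX.neg_notMem_gpdSupport_of_ae_lt_reciprocal
    ((hY.ae_pos hYmeas).mono fun _ => sub_pos.1)
  have hmono := strictMonoOn_neg_one_div_add_sub m (ordConnected_gpdSupport hX.scale_pos) hc
  have hhazard {x : ℝ} (hx : x ∈ gpdSupport ξ ψ) :
      -1 / (x + c) - m ∈ gpdSupport ξ' ψ' ∧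
        gpdCumHazard ξ' ψ' (-1 / (x + c) - m) = gpdCumHazard ξ ψ x :=
    hX.mem_gpdSupport_and_gpdCumHazard_eq_of_comp hmeas hmono hY hYmeas hx
  have hroots : MapsTo (· + c) (gpdSupport ξ ψ)
      {u | (ψ' - ξ' * m) * u ^ 2 + -(ξ' + ξ) * u + (ξ * c - ψ) = 0} := by
    intro x hx
    have hxc : x + c ≠ 0 := fun h => hc (eq_neg_of_add_eq_zero_left h ▸ hx)
    have haffine := add_mul_eq_of_gpdCumHazard_comp_eventuallyEq hX.scale_pos hY.scale_pos hx.2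
      (hhazard hx).1.2 (hasDerivAt_neg_one_div_add_sub m hxc)
      (by filter_upwards [isOpen_gpdSupport.mem_nhds hx] with z hz using (hhazard hz).2)
    field_simp at haffine
    simp only [mem_ofPred_eq]
    linear_combination haffine
  exact sub_eq_zero.1 (constantCoeff_eq_zero_of_infinite_quadratic_roots
    (((infinite_gpdSupport hX.scale_pos).image (add_left_injective c).injOn).mono
      hroots.image_subset))

lemma reciprocal [IsProbabilityMeasure μ] (hX : IsGPD μ X ξ (ξ * c)) (hmeas : Measurable X) :
    IsGPD μ (fun ω => -1 / (X ω + c) - -1 / c) (-ξ) (ξ / c) := by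
  have hξ : ξ ≠ 0 := left_ne_zero_of_mul hX.scale_pos.ne'
  have hc : c ≠ 0 := right_ne_zero_of_mul hX.scale_pos.ne'
  have hξc : 0 < ξ / c := by
    rw [← mul_div_mul_right ξ c hc]
    exact div_pos hX.scale_pos (mul_self_pos.2 hc)
  have hsum {x : ℝ} (hx : x ∈ gpdSupport ξ (ξ * c)) : 0 < ξ * (x + c) := by
    linarith [hx.2, mul_add ξ x c]
  have hsum_ne {x : ℝ} (hx : x ∈ gpdSupport ξ (ξ * c)) : x + c ≠ 0 :=
    right_ne_zero_of_mul (hsum hx).ne'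
  refine hX.comp_of_gpdCumHazard_comp_eqOn (g := fun x => -1 / (x + c) - -1 / c) hmeas hξc ?_ ?_
  · intro x hx
    have hxc := hsum_ne hx
    have hx0 := hx.1
    constructor
    · calc 0 < x * ξ ^ 2 / (ξ * c * (ξ * (x + c))) :=
            div_pos (by positivity) (mul_pos hX.scale_pos (hsum hx))
        _ = -1 / (x + c) - -1 / c := by field_simp; ring
    · calc 0 < ξ ^ 2 / (ξ * (x + c)) := div_pos (by positivity) (hsum hx)
        _ = ξ / c + -ξ * (-1 / (x + c) - -1 / c) := by field_simp; ring
  · intro x hx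
    have hxc := hsum_ne hx
    have hinv : 1 + -ξ * (-1 / (x + c) - -1 / c) / (ξ / c) = (1 + ξ * x / (ξ * c))⁻¹ := by
      rw [one_add_div hX.scale_pos.ne', ← mul_add, add_comm c x]
      field_simp
      ring
    simp only [Function.comp_apply, gpdCumHazard, if_neg hξ, if_neg (neg_ne_zero.2 hξ), hinv,
      Real.log_inv, neg_div_neg_eq]

end IsGPD

theorem gpd_reciprocal_iff_c_general [IsProbabilityMeasure μ] (hmeas : Measurable X)
    (hX : IsGPD μ X ξ ψ) :
    IsGPDWithLoc μ (fun ω => -1 / (X ω + c)) ↔ ξ * c = ψ := by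
  rw [isGPDWithLoc_iff_exists_isGPD]
  constructor
  · rintro ⟨ξ', ψ', m, hY⟩
    exact hX.mul_eq_of_reciprocal hmeas hY
  · rintro rfl
    exact ⟨-ξ, ξ / c, -1 / c, hX.reciprocal hmeas⟩

end Reciprocal

/-- Theorem 9 (first part): let `X ~ GPD(ξ, ψ)` with `ξ ≠ 0`, support
`(0, σ)` (σ = ∞ for ξ > 0, σ = ψ/|ξ| for ξ < 0), and let `c ≥ 0` or
`c ≤ -σ`.  Then `Y = -1/(X + c)` has a GPD distribution with a location
parameter if and only if `c = ψ/ξ`. -/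
theorem gpd_reciprocal_iff_c {Ω : Type*} [MeasurableSpace Ω]
    (μ : Measure Ω) [IsProbabilityMeasure μ] (X : Ω → ℝ) (hX : Measurable X)
    (ξ ψ c : ℝ) (hξ : ξ ≠ 0) (hψ : 0 < ψ)
    (hc : 0 ≤ c ∨ (ξ < 0 ∧ c ≤ -(ψ/(-ξ))))
    (hpos : ∀ᵐ ω ∂μ, 0 < X ω)
    (hsupp : ξ < 0 → ∀ᵐ ω ∂μ, X ω < ψ/(-ξ))
    (htail : ∀ x : ℝ, 0 < x → (ξ < 0 → x < ψ / (-ξ)) →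
      μ {ω | X ω > x} = ENNReal.ofReal ((1 + ξ * x / ψ) ^ (-1/ξ))) :
    IsGPDWithLoc μ (fun ω => -1/(X ω + c)) ↔ c = ψ/ξ := by
  rw [eq_div_iff hξ, mul_comm]
  exact gpd_reciprocal_iff_c_general hX ((isGPD_iff_of_ne_zero hξ hψ).2 htail)
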